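/- (relatively dense recurrence) Let (A,ω,τ,G) be a weakly mixing C*-dynamical system with ω tracial, where G is a countable second countable topological group, Σ its Borel σ-algebra, μ the counting measure, and (g,h,j,k) ↦ ω(τ_h(a₁) τ_g(a₂) τ_{gh}(a₃) τ_{jk}(a₄) τ_j(a₅) τ_k(a₆)) is Σ² × Σ²-measurable for all a₁,...,a₆ ∈ A. Assume uniform Følner sequences (Λ_{1,n}) and (Λ_{2,n}) in G satisfying the Tempel'man condition with (Λ_{1,n}⁻¹Λ_{1,n}) and (Λ_{2,n}⁻¹Λ_{2,n}) also Følner in G, and that (A,ω,τ,G) is uniformly asymptotically abelian with respect to (Λ_{1,n}). Then for any ε > 0 and any a, b, c, d ∈ A there is an n ∈ ℕ such that for every g₁, g₂ ∈ G there exist g ∈ Λ_{2,n}g₂ and h ∈ Λ_{1,n}g₁ with |ω(τ_{gh}(a) τ_g(b) τ_h(c) d)| > |ω(a)ω(b)ω(c)ω(d)| − ε; in particular, the set of pairs (g,h) for which this inequality holds is relatively dense in G × G (i.e. F·E = G × G for some finite set F ⊆ G × G, where E is the set of such pairs). -/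

import Mathlib

open MeasureTheory Filter Topology
open scoped Pointwise ComplexOrder

/-!
The trace property and Cauchy–Schwarz for the GNS seminorm reduce convergence of the double averages
of `ω (τ_{gh}(a) τ_g(b) τ_h(c) d)` to smallness, in mean square over `h`, of the averages over `g`
of `τ_g (τ_h(a) b)` for `ω a = 0`. Weak mixing provides a finite set `K` of translations under which
`a` becomes almost orthogonal, so that averaging over `K` alone is already small, and a Følner
average can be preceded by an average over `K` at a small cost.

Since `G` is abelian, arbitrary translates of a Følner net are again Følner; running the argument
along the net of all translates, indexed by `ι × (G × G)`, gives uniformity in the translates.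
-/

open scoped BigOperators ComplexConjugate Finset symmDiff

lemma tendsto_expect {R α ι : Type*} [Field R] [CharZero R] [TopologicalSpace R]
    [IsTopologicalRing R] {l : Filter α} {K : Finset ι} {f : ι → α → R} {c : ι → R}
    (hf : ∀ i ∈ K, Tendsto (f i) l (𝓝 (c i))) :
    Tendsto (fun n => 𝔼 i ∈ K, f i n) l (𝓝 (𝔼 i ∈ K, c i)) := by
  simp only [Finset.expect_eq_sum_div_card, div_eq_mul_inv]
  exact (tendsto_finsetSum K hf).mul_const _

/-- A state on a complex `*`-algebra, not assumed to be normed: a normalised positive functional. -/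
structure IsState {A : Type*} [Ring A] [StarRing A] [Algebra ℂ A] (ω : A →ₗ[ℂ] ℂ) : Prop where
  nonneg : ∀ a : A, 0 ≤ ω (star a * a)
  map_one : ω 1 = 1

/-- A tracial state: a state with `ω (a * b) = ω (b * a)`. -/
structure IsTracialState {A : Type*} [Ring A] [StarRing A] [Algebra ℂ A] (ω : A →ₗ[ℂ] ℂ) : Prop
    extends IsState ω where
  trace : ∀ a b : A, ω (a * b) = ω (b * a)

section State

variable {A : Type*} [Ring A] [StarRing A] [Algebra ℂ A] [StarModule ℂ A] {ω : A →ₗ[ℂ] ℂ}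

namespace IsState

omit [StarModule ℂ A] in
lemma map_sub_smul_one (hω : IsState ω) (a : A) : ω (a - ω a • 1) = 0 := by
  rw [map_sub, map_smul, hω.map_one, smul_eq_mul, mul_one, sub_self]

lemma map_star (hω : IsState ω) (x : A) : ω (star x) = conj (ω x) := by
  have him (a : A) : (ω (star a * a)).im = 0 := (Complex.le_def.1 (hω.nonneg a)).2.symm
  have h_one := him 1
  have h_x := him x
  have h_add := him (1 + x)
  have h_I := him (1 + Complex.I • x)
  simp only [star_add, star_one, star_smul, add_mul, mul_add, one_mul, mul_one, map_add, map_smul,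
    smul_mul_assoc, mul_smul_comm, smul_eq_mul, Complex.add_im, Complex.mul_im, Complex.mul_re,
    Complex.star_def, Complex.conj_I, Complex.neg_im, Complex.neg_re, Complex.I_re,
    Complex.I_im] at h_one h_x h_add h_I
  refine Complex.ext ?_ ?_
  · rw [Complex.conj_re]
    linarith
  · rw [Complex.conj_im]
    linarith

/-- The sesquilinear form `⟪x, y⟫ = ω (star x * y)` of the GNS construction. -/
@[reducible]
def gnsCore (hω : IsState ω) : PreInnerProductSpace.Core ℂ A where
  inner x y := ω (star x * y)
  conj_inner_symm x y := by rw [← hω.map_star, star_mul, star_star]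
  re_inner_nonneg x := (Complex.le_def.1 (hω.nonneg x)).1
  add_left x y z := by rw [star_add, add_mul, map_add]
  smul_left x y r := by simp

/-- The GNS seminorm `x ↦ √(ω (star x * x))`; its kernel is not divided out. -/
noncomputable def gnsSeminorm (hω : IsState ω) : Seminorm ℂ A :=
  letI := InnerProductSpace.Core.toSeminormedAddCommGroup (c := hω.gnsCore)
  letI := InnerProductSpace.Core.toNormedSpace (c := hω.gnsCore)
  normSeminorm ℂ A

lemma ofReal_gnsSeminorm_sq (hω : IsState ω) (x : A) :
    ((hω.gnsSeminorm x ^ 2 : ℝ) : ℂ) = ω (star x * x) := by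
  have hx := Complex.le_def.1 (hω.nonneg x)
  have h_sq : hω.gnsSeminorm x ^ 2 = (ω (star x * x)).re := Real.sq_sqrt hx.1
  exact Complex.ext h_sq hx.2

lemma gnsSeminorm_sq (hω : IsState ω) (x : A) : hω.gnsSeminorm x ^ 2 = (ω (star x * x)).re := by
  rw [← hω.ofReal_gnsSeminorm_sq, Complex.ofReal_re]

lemma norm_map_star_mul_le (hω : IsState ω) (x y : A) :
    ‖ω (star x * y)‖ ≤ hω.gnsSeminorm x * hω.gnsSeminorm y :=
  letI := hω.gnsCore
  InnerProductSpace.Core.norm_inner_le_norm x y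

end IsState

namespace IsTracialState

lemma gnsSeminorm_star (hω : IsTracialState ω) (x : A) :
    hω.gnsSeminorm (star x) = hω.gnsSeminorm x := by
  rw [← sq_eq_sq₀ (apply_nonneg _ _) (apply_nonneg _ _), hω.gnsSeminorm_sq, hω.gnsSeminorm_sq,
    star_star, hω.trace]

lemma norm_map_mul_le (hω : IsTracialState ω) (x y : A) :
    ‖ω (x * y)‖ ≤ hω.gnsSeminorm x * hω.gnsSeminorm y := by
  simpa only [star_star, hω.gnsSeminorm_star] using hω.norm_map_star_mul_le (star x) y

lemma gnsSeminorm_mul_sq_le (hω : IsTracialState ω) (x y : A) :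
    hω.gnsSeminorm (x * y) ^ 2 ≤
      hω.gnsSeminorm (star x * x) * hω.gnsSeminorm (y * star y) := by
  have h_cycle : ω (star (x * y) * (x * y)) = ω (star x * x * (y * star y)) := by
    rw [star_mul, mul_assoc, hω.trace]
    simp only [mul_assoc]
  rw [hω.gnsSeminorm_sq, h_cycle]
  exact (Complex.re_le_norm _).trans (hω.norm_map_mul_le _ _)

end IsTracialState

end State

section ErgodicAverage

variable {𝕜 E G ι : Type*} [RCLike 𝕜] [AddCommGroup E] [Module 𝕜 E]

lemma seminorm_inv_card_smul_sum_le (p : Seminorm 𝕜 E) (S : Finset ι) (f : ι → E) :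
    p ((#S : 𝕜)⁻¹ • ∑ i ∈ S, f i) ≤ 𝔼 i ∈ S, p (f i) := by
  rw [map_smul_eq_mul, norm_inv, RCLike.norm_natCast, Finset.expect_eq_sum_div_card,
    div_eq_inv_mul]
  gcongr
  exact Finset.le_sum_of_subadditive p (map_zero p).le (map_add_le_add p) S f

section Monoid

variable [Monoid G] (ρ : Representation 𝕜 G E) (S : Finset G)

/-- The operator averaging a representation over a finite set (zero on the empty set). -/
noncomputable def ergodicAverage : Module.End 𝕜 E :=
  (#S : 𝕜)⁻¹ • ∑ g ∈ S, ρ g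

lemma ergodicAverage_apply (x : E) : ergodicAverage ρ S x = (#S : 𝕜)⁻¹ • ∑ g ∈ S, ρ g x := by
  simp [ergodicAverage]

variable {S} in
lemma ergodicAverage_eq_self (hS : S.Nonempty) {x : E} (hx : ∀ g, ρ g x = x) :
    ergodicAverage ρ S x = x := by
  have h_card : (#S : 𝕜) ≠ 0 := Nat.cast_ne_zero.2 hS.card_ne_zero
  simp only [ergodicAverage_apply, hx, Finset.sum_const, ← Nat.cast_smul_eq_nsmul 𝕜]
  rw [inv_smul_smul₀ h_card]

lemma map_ergodicAverage (f : E →ₗ[𝕜] 𝕜) (x : E) :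
    f (ergodicAverage ρ S x) = 𝔼 g ∈ S, f (ρ g x) := by
  rw [ergodicAverage_apply, map_smul, map_sum, Finset.expect_eq_sum_div_card, smul_eq_mul,
    div_eq_inv_mul]

lemma seminorm_ergodicAverage_le (p : Seminorm 𝕜 E) (x : E) :
    p (ergodicAverage ρ S x) ≤ 𝔼 g ∈ S, p (ρ g x) := by
  rw [ergodicAverage_apply]
  exact seminorm_inv_card_smul_sum_le p S _

variable {S} in
lemma seminorm_ergodicAverage_sub_le (hS : S.Nonempty) (p : Seminorm 𝕜 E) (x : E) :
    p (ergodicAverage ρ S x - x) ≤ 𝔼 g ∈ S, p (ρ g x - x) := by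
  have h_card : (#S : 𝕜) ≠ 0 := Nat.cast_ne_zero.2 hS.card_ne_zero
  have h_diff : ergodicAverage ρ S x - x = (#S : 𝕜)⁻¹ • ∑ g ∈ S, (ρ g x - x) := by
    rw [Finset.sum_sub_distrib, Finset.sum_const, smul_sub, ← Nat.cast_smul_eq_nsmul 𝕜,
      inv_smul_smul₀ h_card, ergodicAverage_apply]
  rw [h_diff]
  exact seminorm_inv_card_smul_sum_le p S _

end Monoid

/-- The ratio `#(kS ∆ S) / #S`, which measures how far `S` is from being `k`-invariant. -/
noncomputable def boundaryRatio [Group G] [DecidableEq G] (S : Finset G) (k : G) : ℝ :=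
  #((k • S) ∆ S) / #S

lemma boundaryRatio_nonneg [Group G] [DecidableEq G] (S : Finset G) (k : G) :
    0 ≤ boundaryRatio S k := by
  unfold boundaryRatio
  positivity

lemma seminorm_apply_ergodicAverage_sub_le [Group G] [DecidableEq G] (ρ : Representation 𝕜 G E)
    {p : Seminorm 𝕜 E} (hp : ∀ g x, p (ρ g x) = p x) (S : Finset G) (k : G) (x : E) :
    p (ρ k (ergodicAverage ρ S x) - ergodicAverage ρ S x) ≤ boundaryRatio S k * p x := by
  have h_le (T : Finset G) : p (∑ g ∈ T, ρ g x) ≤ #T * p x := by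
    simpa [hp] using
      Finset.le_sum_of_subadditive p (map_zero p).le (map_add_le_add p) T fun g => ρ g x
  have h_translate : ρ k (∑ g ∈ S, ρ g x) = ∑ g ∈ k • S, ρ g x := by
    rw [map_sum, ← Finset.image_smul, Finset.sum_image (MulAction.injective k).injOn]
    simp
  have h_card : (#((k • S) ∆ S) : ℝ) = #((k • S) \ S) + #(S \ (k • S)) := by
    rw [Finset.symmDiff_def, Finset.card_union_of_disjoint disjoint_sdiff_sdiff, Nat.cast_add]
  calc p (ρ k (ergodicAverage ρ S x) - ergodicAverage ρ S x)
      = (#S : ℝ)⁻¹ * p (∑ g ∈ (k • S) \ S, ρ g x - ∑ g ∈ S \ (k • S), ρ g x) := by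
        rw [ergodicAverage_apply, map_smul, h_translate, ← smul_sub, map_smul_eq_mul, norm_inv,
          RCLike.norm_natCast, Finset.sum_sdiff_sub_sum_sdiff]
    _ ≤ (#S : ℝ)⁻¹ * (#((k • S) \ S) * p x + #(S \ (k • S)) * p x) := by
        gcongr
        exact (map_sub_le_add p _ _).trans (add_le_add (h_le _) (h_le _))
    _ = boundaryRatio S k * p x := by
        rw [boundaryRatio, h_card]
        ring

section Comm

variable [CommGroup G] (ρ : Representation 𝕜 G E)

lemma commute_ergodicAverage (K S : Finset G) :
    Commute (ergodicAverage ρ K) (ergodicAverage ρ S) := by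
  have h_comm (k s : G) : Commute (ρ k) (ρ s) := (Commute.all k s).map ρ
  exact ((Commute.sum_left _ _ _ fun k _ => Commute.sum_right _ _ _ fun s _ =>
    h_comm k s).smul_left _).smul_right _

variable [DecidableEq G] {ρ} {p : Seminorm 𝕜 E}

lemma seminorm_ergodicAverage_le_smoothed (hp : ∀ g x, p (ρ g x) = p x) {K : Finset G}
    (hK : K.Nonempty) (S : Finset G) (x : E) :
    p (ergodicAverage ρ S x) ≤
      p (ergodicAverage ρ K x) + (𝔼 k ∈ K, boundaryRatio S k) * p x := by
  have h_comm : p (ergodicAverage ρ K (ergodicAverage ρ S x)) ≤ p (ergodicAverage ρ K x) := by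
    rcases S.eq_empty_or_nonempty with rfl | hS
    · simp [ergodicAverage_apply]
    · rw [← Module.End.mul_apply, (commute_ergodicAverage ρ K S).eq, Module.End.mul_apply]
      refine (seminorm_ergodicAverage_le ρ S p _).trans_eq ?_
      simp only [hp, Finset.expect_const hS]
  have h_sub : p (ergodicAverage ρ K (ergodicAverage ρ S x) - ergodicAverage ρ S x) ≤
      (𝔼 k ∈ K, boundaryRatio S k) * p x := by
    rw [Finset.expect_mul]
    exact (seminorm_ergodicAverage_sub_le ρ hK p _).trans <| Finset.expect_le_expect fun k _ =>
      seminorm_apply_ergodicAverage_sub_le ρ hp S k x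
  have h_tri := map_sub_le_add p (ergodicAverage ρ K (ergodicAverage ρ S x))
    (ergodicAverage ρ K (ergodicAverage ρ S x) - ergodicAverage ρ S x)
  rw [sub_sub_cancel] at h_tri
  linarith

end Comm

/-- A net of finite sets which is eventually nonempty and asymptotically invariant under each
translation. This is the finite-set form of Mathlib's `IsFoelner` for the counting measure. -/
structure IsFoelnerNet [Group G] [DecidableEq G] (l : Filter ι) (S : ι → Finset G) : Prop where
  eventually_nonempty : ∀ᶠ i in l, (S i).Nonempty
  tendsto_boundaryRatio : ∀ k, Tendsto (fun i => boundaryRatio (S i) k) l (𝓝 0)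

lemma IsFoelnerNet.tendsto_expect_boundaryRatio [Group G] [DecidableEq G] {l : Filter ι}
    {S : ι → Finset G} (hS : IsFoelnerNet l S) (K : Finset G) :
    Tendsto (fun i => 𝔼 k ∈ K, boundaryRatio (S i) k) l (𝓝 0) := by
  simpa using tendsto_expect fun k (_ : k ∈ K) => hS.tendsto_boundaryRatio k

section Limit

variable [CommGroup G] [DecidableEq G] {ρ : Representation 𝕜 G E} {p : Seminorm 𝕜 E}
  {l : Filter ι} {S : ι → Finset G}

/- Averaging over `S i` can be preceded by averaging over a fixed `K` at a cost that is uniform on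
`p`-bounded sets of vectors. -/
lemma IsFoelnerNet.tendsto_expect_seminorm_sq (hS : IsFoelnerNet l S)
    (hp : ∀ g x, p (ρ g x) = p x) {H : Type*} {T : ι → Finset H} {y : H → E} {C : ℝ}
    (hT : ∀ᶠ i in l, (T i).Nonempty) (hC : ∀ h, p (y h) ≤ C)
    (hK : ∀ δ > 0, ∃ K : Finset G, K.Nonempty ∧
      ∀ᶠ i in l, 𝔼 h ∈ T i, p (ergodicAverage ρ K (y h)) ^ 2 < δ) :
    Tendsto (fun i => 𝔼 h ∈ T i, p (ergodicAverage ρ (S i) (y h)) ^ 2) l (𝓝 0) := by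
  refine tendsto_order.2 ⟨fun r hr => .of_forall fun i =>
    hr.trans_le (Finset.expect_nonneg fun h _ => sq_nonneg _), fun δ hδ => ?_⟩
  obtain ⟨K, hK_nonempty, hK_small⟩ := hK (δ / 4) (by positivity)
  have h_error : Tendsto (fun i => 2 * ((𝔼 k ∈ K, boundaryRatio (S i) k) * C) ^ 2) l (𝓝 0) := by
    simpa using (((hS.tendsto_expect_boundaryRatio K).mul_const C).pow 2).const_mul 2
  filter_upwards [hT, hK_small, h_error.eventually_lt_const (half_pos hδ)]
    with i hT_nonempty hK_lt h_error_lt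
  set r := 𝔼 k ∈ K, boundaryRatio (S i) k
  have hr : 0 ≤ r := Finset.expect_nonneg fun k _ => boundaryRatio_nonneg _ _
  have h_smooth (h : H) : p (ergodicAverage ρ (S i) (y h)) ^ 2 ≤
      2 * p (ergodicAverage ρ K (y h)) ^ 2 + 2 * (r * C) ^ 2 := by
    have h_le : p (ergodicAverage ρ (S i) (y h)) ≤ p (ergodicAverage ρ K (y h)) + r * C :=
      (seminorm_ergodicAverage_le_smoothed hp hK_nonempty (S i) (y h)).trans <| by
        gcongr
        exact hC h
    calc p (ergodicAverage ρ (S i) (y h)) ^ 2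
        ≤ (p (ergodicAverage ρ K (y h)) + r * C) ^ 2 := by gcongr
      _ ≤ 2 * (p (ergodicAverage ρ K (y h)) ^ 2 + (r * C) ^ 2) := add_sq_le
      _ = _ := mul_add _ _ _
  calc 𝔼 h ∈ T i, p (ergodicAverage ρ (S i) (y h)) ^ 2
      ≤ 𝔼 h ∈ T i, (2 * p (ergodicAverage ρ K (y h)) ^ 2 + 2 * (r * C) ^ 2) :=
        Finset.expect_le_expect fun h _ => h_smooth h
    _ = 2 * 𝔼 h ∈ T i, p (ergodicAverage ρ K (y h)) ^ 2 + 2 * (r * C) ^ 2 := by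
        rw [Finset.expect_add_distrib, ← Finset.mul_expect, Finset.expect_const hT_nonempty]
    _ < δ := by linarith

lemma IsFoelnerNet.tendsto_seminorm_ergodicAverage (hS : IsFoelnerNet l S)
    (hp : ∀ g x, p (ρ g x) = p x) {x : E}
    (hK : ∀ δ > 0, ∃ K : Finset G, K.Nonempty ∧ p (ergodicAverage ρ K x) ^ 2 < δ) :
    Tendsto (fun i => p (ergodicAverage ρ (S i) x)) l (𝓝 0) := by
  have h_sq : Tendsto (fun i => p (ergodicAverage ρ (S i) x) ^ 2) l (𝓝 0) := by
    simpa using hS.tendsto_expect_seminorm_sq hp (T := fun _ => {()}) (y := fun _ => x)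
      (.of_forall fun _ => Finset.singleton_nonempty _) (fun _ => le_rfl) fun δ hδ =>
        (hK δ hδ).imp fun K hK => ⟨hK.1, .of_forall fun _ => by simpa using hK.2⟩
  simpa using h_sq.sqrt

end Limit

end ErgodicAverage

section WeaklyMixing

variable {A G ι : Type*} [Ring A] [StarRing A] [Algebra ℂ A]

/-- An action by `*`-automorphisms, regarded as a linear representation on the algebra. -/
def koopmanRep [Monoid G] (τ : G →* (A ≃⋆ₐ[ℂ] A)) : Representation ℂ G A where
  toFun g := { toFun := τ g, map_add' := map_add _, map_smul' := map_smul _ }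
  map_one' := by ext; simp
  map_mul' g h := by ext; simp

@[simp]
lemma koopmanRep_apply [Monoid G] (τ : G →* (A ≃⋆ₐ[ℂ] A)) (g : G) (a : A) :
    koopmanRep τ g a = τ g a := rfl

lemma ergodicAverage_koopmanRep_sub_smul_one [Monoid G] (τ : G →* (A ≃⋆ₐ[ℂ] A)) {S : Finset G}
    (hS : S.Nonempty) (a : A) (c : ℂ) :
    ergodicAverage (koopmanRep τ) S (a - c • 1) = ergodicAverage (koopmanRep τ) S a - c • 1 := by
  rw [map_sub, map_smul, ergodicAverage_eq_self (koopmanRep τ) hS fun g => map_one (τ g)]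

/-- Weak mixing: correlations vanish on average along some sequence of nonempty finite sets. The
sets are not required to form a Følner sequence. -/
def IsWeaklyMixing [Monoid G] (ω : A →ₗ[ℂ] ℂ) (τ : G →* (A ≃⋆ₐ[ℂ] A)) : Prop :=
  ∃ S : ℕ → Finset G, (∀ᶠ n in atTop, (S n).Nonempty) ∧ ∀ a b : A,
    Tendsto (fun n => 𝔼 g ∈ S n, ‖ω (a * τ g b) - ω a * ω b‖) atTop (𝓝 0)

lemma IsWeaklyMixing.exists_forall_norm_sub_lt [Monoid G] {ω : A →ₗ[ℂ] ℂ}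
    {τ : G →* (A ≃⋆ₐ[ℂ] A)} (hmix : IsWeaklyMixing ω τ) (B : Finset A) (a : A) {δ : ℝ}
    (hδ : 0 < δ) : ∃ g, ∀ b ∈ B, ‖ω (b * τ g a) - ω b * ω a‖ < δ := by
  obtain ⟨S, hS, h_lim⟩ := hmix
  have h_sum : Tendsto (fun n => ∑ b ∈ B, 𝔼 g ∈ S n, ‖ω (b * τ g a) - ω b * ω a‖) atTop (𝓝 0) := by
    simpa using tendsto_finsetSum B fun b _ => h_lim b a
  obtain ⟨n, hS_nonempty, hn⟩ := (hS.and (h_sum.eventually_lt_const hδ)).exists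
  rw [← Finset.expect_sum_comm] at hn
  obtain ⟨g, -, hg⟩ := Finset.exists_lt_of_expect_lt hS_nonempty hn
  exact ⟨g, fun b hb => (Finset.single_le_sum
    (f := fun b => ‖ω (b * τ g a) - ω b * ω a‖) (fun _ _ => norm_nonneg _) hb).trans_lt hg⟩

variable [StarModule ℂ A] {ω : A →ₗ[ℂ] ℂ}

namespace IsState

lemma gnsSeminorm_apply [Monoid G] (hω : IsState ω) {τ : G →* (A ≃⋆ₐ[ℂ] A)}
    (hτ : ∀ g a, ω (τ g a) = ω a) (g : G) (x : A) :
    hω.gnsSeminorm (τ g x) = hω.gnsSeminorm x := by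
  rw [← sq_eq_sq₀ (apply_nonneg _ _) (apply_nonneg _ _), hω.gnsSeminorm_sq, hω.gnsSeminorm_sq,
    ← StarHomClass.map_star, ← map_mul, hτ]

lemma ofReal_gnsSeminorm_ergodicAverage_sq [Monoid G] (hω : IsState ω) (τ : G →* (A ≃⋆ₐ[ℂ] A))
    (K : Finset G) (x : A) :
    ((hω.gnsSeminorm (ergodicAverage (koopmanRep τ) K x) ^ 2 : ℝ) : ℂ) =
      𝔼 i ∈ K, 𝔼 j ∈ K, ω (star (τ i x) * τ j x) := by
  rw [hω.ofReal_gnsSeminorm_sq, ergodicAverage_apply]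
  simp only [koopmanRep_apply, star_smul, star_sum, star_inv₀, star_natCast, smul_mul_smul_comm,
    Finset.sum_mul_sum, map_smul, map_sum, smul_eq_mul, Finset.expect_eq_sum_div_card,
    ← Finset.sum_div]
  ring

lemma gnsSeminorm_ergodicAverage_sq_le [Monoid G] (hω : IsState ω) (τ : G →* (A ≃⋆ₐ[ℂ] A))
    (K : Finset G) (x : A) :
    hω.gnsSeminorm (ergodicAverage (koopmanRep τ) K x) ^ 2 ≤
      𝔼 i ∈ K, 𝔼 j ∈ K, ‖ω (star (τ i x) * τ j x)‖ := by
  rw [← Complex.norm_of_nonneg (sq_nonneg _), hω.ofReal_gnsSeminorm_ergodicAverage_sq]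
  exact (RCLike.norm_expect_le (K := ℂ)).trans <|
    Finset.expect_le_expect fun i _ => RCLike.norm_expect_le (K := ℂ)

variable [Monoid G] (hω : IsState ω) {τ : G →* (A ≃⋆ₐ[ℂ] A)} (hτ : ∀ g a, ω (τ g a) = ω a)
  (hmix : IsWeaklyMixing ω τ) {a : A} (ha : ω a = 0) {δ : ℝ}
include hω hτ hmix ha

lemma exists_card_eq_pairwise_norm_lt (hδ : 0 < δ) (h_lt : δ < hω.gnsSeminorm a ^ 2) (n : ℕ) :
    ∃ K : Finset G, #K = n ∧
      (K : Set G).Pairwise fun i j => ‖ω (star (τ i a) * τ j a)‖ < δ := by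
  classical
  have h_symm (i j : G) : ω (star (τ j a) * τ i a) = conj (ω (star (τ i a) * τ j a)) := by
    rw [← hω.map_star, star_mul, star_star]
  induction n with
  | zero => exact ⟨∅, rfl, by simp⟩
  | succ n ih =>
    obtain ⟨K, hK_card, hK⟩ := ih
    obtain ⟨g, hg⟩ := hmix.exists_forall_norm_sub_lt (K.image fun i => star (τ i a)) a hδ
    have h_small (i : G) (hi : i ∈ K) : ‖ω (star (τ i a) * τ g a)‖ < δ := by
      simpa [ha] using hg _ (Finset.mem_image_of_mem _ hi)
    have h_new : g ∉ K := fun hgK => by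
      have h_sq := (hω.ofReal_gnsSeminorm_sq (τ g a)).symm
      rw [hω.gnsSeminorm_apply hτ] at h_sq
      have := h_small g hgK
      rw [h_sq, Complex.norm_of_nonneg (sq_nonneg _)] at this
      exact lt_asymm h_lt this
    refine ⟨insert g K, by rw [Finset.card_insert_of_notMem h_new, hK_card], ?_⟩
    rw [Finset.coe_insert]
    refine hK.insert fun i hi _ => ⟨?_, h_small i hi⟩
    rw [h_symm, Complex.norm_conj]
    exact h_small i hi

lemma exists_expect_norm_le (hδ : 0 < δ) : ∃ K : Finset G, K.Nonempty ∧
    𝔼 i ∈ K, 𝔼 j ∈ K, ‖ω (star (τ i a) * τ j a)‖ ≤ δ := by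
  classical
  set M := hω.gnsSeminorm a ^ 2
  have h_le (i j : G) : ‖ω (star (τ i a) * τ j a)‖ ≤ M := by
    simpa [hω.gnsSeminorm_apply hτ, M, sq] using hω.norm_map_star_mul_le (τ i a) (τ j a)
  rcases le_or_gt M (δ / 2) with hM | hM
  · exact ⟨{1}, Finset.singleton_nonempty 1, by simpa using (h_le 1 1).trans (by linarith)⟩
  obtain ⟨n, hn⟩ := exists_nat_gt (M / (δ / 2))
  have hn_pos : (0 : ℝ) < n := (by positivity : 0 ≤ M / (δ / 2)).trans_lt hn
  obtain ⟨K, rfl, hK⟩ :=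
    hω.exists_card_eq_pairwise_norm_lt hτ hmix ha (half_pos hδ) hM n
  have hK_nonempty : K.Nonempty := Finset.card_pos.1 (mod_cast hn_pos)
  have h_diag (i j : G) (hi : i ∈ K) (hj : j ∈ K) :
      ‖ω (star (τ i a) * τ j a)‖ ≤ δ / 2 + if i = j then M else 0 := by
    split_ifs with hij
    · linarith [h_le i j]
    · linarith [hK hi hj hij]
  have h_row (i : G) (hi : i ∈ K) : 𝔼 j ∈ K, ‖ω (star (τ i a) * τ j a)‖ ≤ δ :=
    calc 𝔼 j ∈ K, ‖ω (star (τ i a) * τ j a)‖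
        ≤ 𝔼 j ∈ K, (δ / 2 + if i = j then M else 0) :=
          Finset.expect_le_expect fun j hj => h_diag i j hi hj
      _ = δ / 2 + M / #K := by
          rw [Finset.expect_add_distrib, Finset.expect_const hK_nonempty,
            Finset.expect_eq_sum_div_card, Finset.sum_ite_eq, if_pos hi]
      _ ≤ δ / 2 + δ / 2 := by
          linarith [(div_lt_comm₀ (half_pos hδ) hn_pos).1 hn]
      _ = δ := add_halves δ
  exact ⟨K, hK_nonempty, Finset.expect_le hK_nonempty h_row⟩

end IsState

lemma IsTracialState.gnsSeminorm_apply_mul_le [Monoid G] (hω : IsTracialState ω)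
    {τ : G →* (A ≃⋆ₐ[ℂ] A)} (hτ : ∀ g a, ω (τ g a) = ω a) (g : G) (a b : A) :
    hω.gnsSeminorm (τ g a * b) ≤
      √(hω.gnsSeminorm (star a * a) * hω.gnsSeminorm (b * star b)) := by
  refine Real.le_sqrt_of_sq_le ((hω.gnsSeminorm_mul_sq_le _ _).trans_eq ?_)
  rw [← StarHomClass.map_star, ← map_mul (τ g), hω.gnsSeminorm_apply hτ]

section Limit

variable [CommGroup G] [DecidableEq G] {τ : G →* (A ≃⋆ₐ[ℂ] A)} {l : Filter ι} {S T : ι → Finset G}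

namespace IsState

variable (hω : IsState ω) (hτ : ∀ g a, ω (τ g a) = ω a) (hmix : IsWeaklyMixing ω τ)
include hω hτ hmix

lemma tendsto_gnsSeminorm_ergodicAverage (hS : IsFoelnerNet l S) {a : A} (ha : ω a = 0) :
    Tendsto (fun n => hω.gnsSeminorm (ergodicAverage (koopmanRep τ) (S n) a)) l (𝓝 0) := by
  refine hS.tendsto_seminorm_ergodicAverage (hω.gnsSeminorm_apply hτ) fun δ hδ => ?_
  obtain ⟨K, hK_nonempty, hK⟩ := hω.exists_expect_norm_le hτ hmix ha (half_pos hδ)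
  exact ⟨K, hK_nonempty, (hω.gnsSeminorm_ergodicAverage_sq_le τ K a).trans_lt (by linarith)⟩

lemma tendsto_expect_map_mul_apply (hS : IsFoelnerNet l S) (a b : A) :
    Tendsto (fun n => 𝔼 g ∈ S n, ω (a * τ g b)) l (𝓝 (ω a * ω b)) := by
  have h_lim := (hω.tendsto_gnsSeminorm_ergodicAverage hτ hmix hS
    (hω.map_sub_smul_one b)).const_mul (hω.gnsSeminorm (star a))
  rw [mul_zero] at h_lim
  refine tendsto_iff_norm_sub_tendsto_zero.2 <|
    squeeze_zero' (.of_forall fun _ => norm_nonneg _) ?_ h_lim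
  filter_upwards [hS.eventually_nonempty] with n hn
  have h_eq : (𝔼 g ∈ S n, ω (a * τ g b)) - ω a * ω b =
      ω (star (star a) * ergodicAverage (koopmanRep τ) (S n) (b - ω b • 1)) := by
    rw [ergodicAverage_koopmanRep_sub_smul_one τ hn, star_star, mul_sub, map_sub, mul_smul_comm,
      mul_one, map_smul, smul_eq_mul, mul_comm (ω b)]
    congr 1
    exact (map_ergodicAverage (koopmanRep τ) (S n) (ω ∘ₗ LinearMap.mulLeft ℂ a) b).symm
  rw [h_eq]
  exact hω.norm_map_star_mul_le _ _

end IsState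

namespace IsTracialState

variable (hω : IsTracialState ω)
include hω

lemma tendsto_expect_map_mul {H : Type*} {U : ι → Finset H} {y : ι → H → A} {x : H → A} {C : ℝ}
    (hC : ∀ h, hω.gnsSeminorm (x h) ≤ C)
    (hy : Tendsto (fun n => 𝔼 h ∈ U n, hω.gnsSeminorm (y n h) ^ 2) l (𝓝 0)) :
    Tendsto (fun n => 𝔼 h ∈ U n, ω (y n h * x h)) l (𝓝 0) := by
  have h_sqrt : Tendsto (fun n => √((𝔼 h ∈ U n, hω.gnsSeminorm (y n h) ^ 2) * C ^ 2)) l (𝓝 0) := by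
    simpa using (hy.mul_const (C ^ 2)).sqrt
  refine squeeze_zero_norm (fun n => Real.le_sqrt_of_sq_le ?_) h_sqrt
  rcases (U n).eq_empty_or_nonempty with h_empty | hU
  · simp [h_empty]
  calc ‖𝔼 h ∈ U n, ω (y n h * x h)‖ ^ 2
      ≤ (𝔼 h ∈ U n, hω.gnsSeminorm (y n h) * hω.gnsSeminorm (x h)) ^ 2 := by
        gcongr
        exact (RCLike.norm_expect_le (K := ℂ)).trans <|
          Finset.expect_le_expect fun h _ => hω.norm_map_mul_le _ _
    _ ≤ (𝔼 h ∈ U n, hω.gnsSeminorm (y n h) ^ 2) * 𝔼 h ∈ U n, hω.gnsSeminorm (x h) ^ 2 :=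
        Finset.expect_mul_sq_le_sq_mul_sq _ _ _
    _ ≤ (𝔼 h ∈ U n, hω.gnsSeminorm (y n h) ^ 2) * C ^ 2 := by
        refine mul_le_mul_of_nonneg_left ?_ (Finset.expect_nonneg fun h _ => sq_nonneg _)
        exact Finset.expect_le hU fun h _ => pow_le_pow_left₀ (apply_nonneg _ _) (hC h) 2

variable (hτ : ∀ g a, ω (τ g a) = ω a)
include hτ

variable (hmix : IsWeaklyMixing ω τ) (hS : IsFoelnerNet l S)
include hmix hS

lemma tendsto_expect_gnsSeminorm_ergodicAverage_sq (K : Finset G) (a b : A) :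
    Tendsto (fun n => 𝔼 h ∈ S n,
        ((hω.gnsSeminorm (ergodicAverage (koopmanRep τ) K (τ h a * b)) ^ 2 : ℝ) : ℂ)) l
      (𝓝 (𝔼 i ∈ K, 𝔼 j ∈ K, ω (τ j b * star (τ i b)) * ω (star (τ i a) * τ j a))) := by
  have h_cycle (h i j : G) : ω (star (τ i (τ h a * b)) * τ j (τ h a * b)) =
      ω (τ j b * star (τ i b) * τ h (star (τ i a) * τ j a)) := by
    have h_comm (k : G) : τ k (τ h a) = τ h (τ k a) := by
      rw [← StarAlgEquiv.mul_apply, ← map_mul, mul_comm, map_mul, StarAlgEquiv.mul_apply]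
    rw [map_mul (τ i), map_mul (τ j), star_mul, map_mul (τ h), StarHomClass.map_star (τ h), h_comm,
      h_comm, ← mul_assoc, hω.trace]
    simp only [mul_assoc]
  simp only [hω.ofReal_gnsSeminorm_ergodicAverage_sq, h_cycle]
  have h_swap (n : ι) : 𝔼 h ∈ S n, 𝔼 i ∈ K, 𝔼 j ∈ K,
        ω (τ j b * star (τ i b) * τ h (star (τ i a) * τ j a)) =
      𝔼 i ∈ K, 𝔼 j ∈ K, 𝔼 h ∈ S n,
        ω (τ j b * star (τ i b) * τ h (star (τ i a) * τ j a)) := by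
    rw [Finset.expect_comm]
    exact Finset.expect_congr rfl fun i _ => Finset.expect_comm _ _ _
  simp only [h_swap]
  exact tendsto_expect fun i _ => tendsto_expect fun j _ =>
    hω.tendsto_expect_map_mul_apply hτ hmix hS _ _

lemma tendsto_expect_gnsSeminorm_ergodicAverage_sq_zero (hT : IsFoelnerNet l T) {a : A}
    (ha : ω a = 0) (b : A) :
    Tendsto (fun n => 𝔼 h ∈ S n,
      hω.gnsSeminorm (ergodicAverage (koopmanRep τ) (T n) (τ h a * b)) ^ 2) l (𝓝 0) := by
  refine hT.tendsto_expect_seminorm_sq (hω.gnsSeminorm_apply hτ) hS.eventually_nonempty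
    (fun h => hω.gnsSeminorm_apply_mul_le hτ h a b) fun δ hδ => ?_
  set M := hω.gnsSeminorm b ^ 2
  obtain ⟨K, hK_nonempty, hK⟩ :=
    hω.exists_expect_norm_le hτ hmix ha (δ := δ / (M + 1)) (by positivity)
  have h_norm (i j : G) : ‖ω (τ j b * star (τ i b))‖ ≤ M := by
    simpa [hω.gnsSeminorm_star, hω.gnsSeminorm_apply hτ, M, sq] using
      hω.norm_map_mul_le (τ j b) (star (τ i b))
  have h_limit_lt :
      ‖𝔼 i ∈ K, 𝔼 j ∈ K, ω (τ j b * star (τ i b)) * ω (star (τ i a) * τ j a)‖ < δ :=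
    calc ‖𝔼 i ∈ K, 𝔼 j ∈ K, ω (τ j b * star (τ i b)) * ω (star (τ i a) * τ j a)‖
        ≤ 𝔼 i ∈ K, 𝔼 j ∈ K, M * ‖ω (star (τ i a) * τ j a)‖ := by
          refine (RCLike.norm_expect_le (K := ℂ)).trans <| Finset.expect_le_expect fun i _ =>
            (RCLike.norm_expect_le (K := ℂ)).trans <| Finset.expect_le_expect fun j _ => ?_
          rw [norm_mul]
          gcongr
          exact h_norm i j
      _ = M * 𝔼 i ∈ K, 𝔼 j ∈ K, ‖ω (star (τ i a) * τ j a)‖ := by simp only [Finset.mul_expect]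
      _ ≤ M * (δ / (M + 1)) := by gcongr
      _ < δ := by
          rw [mul_div_assoc', div_lt_iff₀ (by positivity)]
          linarith
  refine ⟨K, hK_nonempty, ?_⟩
  filter_upwards [(hω.tendsto_expect_gnsSeminorm_ergodicAverage_sq hτ hmix hS K a b).norm
    |>.eventually_lt_const h_limit_lt] with n hn
  rw [← Complex.ofReal_expect, Complex.norm_real] at hn
  exact (le_abs_self _).trans_lt hn

lemma tendsto_expect_gnsSeminorm_ergodicAverage_sub_sq (hT : IsFoelnerNet l T) (a b : A) :
    Tendsto (fun n => 𝔼 h ∈ S n, hω.gnsSeminorm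
      (ergodicAverage (koopmanRep τ) (T n) (τ h a * b) - (ω a * ω b) • 1) ^ 2) l (𝓝 0) := by
  set a₀ := a - ω a • (1 : A)
  set b₀ := b - ω b • (1 : A)
  have h_a₀ := hω.tendsto_expect_gnsSeminorm_ergodicAverage_sq_zero hτ hmix hS hT
    (hω.map_sub_smul_one a) b
  have h_b₀ := hω.tendsto_gnsSeminorm_ergodicAverage hτ hmix hT (hω.map_sub_smul_one b)
  have h_bound := (h_a₀.const_mul 2).add (((h_b₀.const_mul ‖ω a‖).pow 2).const_mul 2)
  simp only [mul_zero, zero_pow two_ne_zero, add_zero] at h_bound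
  refine squeeze_zero' (.of_forall fun n => Finset.expect_nonneg fun h _ => sq_nonneg _) ?_ h_bound
  filter_upwards [hS.eventually_nonempty, hT.eventually_nonempty] with n hSn hTn
  have h_split (h : G) :
      ergodicAverage (koopmanRep τ) (T n) (τ h a * b) - (ω a * ω b) • (1 : A) =
        ergodicAverage (koopmanRep τ) (T n) (τ h a₀ * b) +
          ω a • ergodicAverage (koopmanRep τ) (T n) b₀ := by
    simp only [a₀, b₀, ergodicAverage_koopmanRep_sub_smul_one τ hTn, map_sub, map_smul, map_one,
      sub_mul, smul_mul_assoc, one_mul, smul_sub, smul_smul]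
    abel
  have h_le (h : G) : hω.gnsSeminorm
      (ergodicAverage (koopmanRep τ) (T n) (τ h a * b) - (ω a * ω b) • 1) ^ 2 ≤
        2 * hω.gnsSeminorm (ergodicAverage (koopmanRep τ) (T n) (τ h a₀ * b)) ^ 2 +
          2 * (‖ω a‖ * hω.gnsSeminorm (ergodicAverage (koopmanRep τ) (T n) b₀)) ^ 2 := by
    rw [h_split, ← mul_add, ← map_smul_eq_mul]
    exact (pow_le_pow_left₀ (apply_nonneg _ _) (map_add_le_add _ _ _) 2).trans add_sq_le
  refine (Finset.expect_le_expect fun h _ => h_le h).trans_eq ?_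
  rw [Finset.expect_add_distrib, ← Finset.mul_expect, Finset.expect_const hSn]

lemma tendsto_expect_expect (hT : IsFoelnerNet l T) (a b c d : A) :
    Tendsto (fun n => 𝔼 h ∈ S n, 𝔼 g ∈ T n, ω (τ (g * h) a * τ g b * τ h c * d)) l
      (𝓝 (ω a * ω b * ω c * ω d)) := by
  have h_error := hω.tendsto_expect_map_mul (hω.gnsSeminorm_apply_mul_le hτ · c d)
    (hω.tendsto_expect_gnsSeminorm_ergodicAverage_sub_sq hτ hmix hS hT a b)
  have h_main := (hω.tendsto_expect_map_mul_apply hτ hmix hS d c).const_mul (ω a * ω b)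
  convert h_error.add h_main using 2 with n
  · rw [Finset.mul_expect, ← Finset.expect_add_distrib]
    refine Finset.expect_congr rfl fun h _ => ?_
    have h_average := map_ergodicAverage (koopmanRep τ) (T n)
      (ω ∘ₗ LinearMap.mulRight ℂ (τ h c * d)) (τ h a * b)
    simp only [LinearMap.comp_apply, LinearMap.mulRight_apply, koopmanRep_apply] at h_average
    rw [sub_mul, map_sub, h_average, smul_mul_assoc, one_mul, map_smul, smul_eq_mul,
      hω.trace d, sub_add_cancel]
    simp only [map_mul, StarAlgEquiv.mul_apply, mul_assoc]
  · ring

lemma eventually_exists_norm_gt (hT : IsFoelnerNet l T) (a b c d : A) {ε : ℝ} (hε : 0 < ε) :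
    ∀ᶠ n in l, ∃ g ∈ T n, ∃ h ∈ S n, ‖ω a * ω b * ω c * ω d‖ - ε <
      ‖ω (τ (g * h) a * τ g b * τ h c * d)‖ := by
  have h_norm := (hω.tendsto_expect_expect hτ hmix hS hT a b c d).norm
  filter_upwards [hS.eventually_nonempty, hT.eventually_nonempty,
    h_norm.eventually_const_lt (sub_lt_self _ hε)] with n hSn hTn hn
  obtain ⟨h, hh, h_lt⟩ :=
    Finset.exists_lt_of_lt_expect hSn (hn.trans_le (RCLike.norm_expect_le (K := ℂ)))
  obtain ⟨g, hg, g_lt⟩ :=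
    Finset.exists_lt_of_lt_expect hTn (h_lt.trans_le (RCLike.norm_expect_le (K := ℂ)))
  exact ⟨g, hg, h, hh, g_lt⟩

end IsTracialState

end Limit

end WeaklyMixing

lemma isFoelner_smul {G X ι : Type*} [CommGroup G] [MulAction G X] [MeasurableSpace X]
    [MeasurableConstSMul G X] {μ : Measure X} [SMulInvariantMeasure G X μ]
    {l : Filter ι} {F : ι → Set X} (hF : IsFoelner G μ l F) (g : ι → G) :
    IsFoelner G μ l fun i => g i • F i where
  eventually_measurableSet := hF.eventually_measurableSet.mono fun i hi => hi.const_smul (g i)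
  eventually_meas_ne_zero := by simpa only [measure_smul] using hF.eventually_meas_ne_zero
  eventually_meas_ne_top := by simpa only [measure_smul] using hF.eventually_meas_ne_top
  tendsto_meas_smul_symmDiff k := by
    simpa only [smul_comm k, ← Set.smul_set_symmDiff, measure_smul] using
      hF.tendsto_meas_smul_symmDiff k

lemma exists_finset_eventually_coe_eq {α ι : Type*} {l : Filter ι} {s : ι → Set α}
    (hs : ∀ᶠ i in l, (s i).Finite) : ∃ S : ι → Finset α, ∀ᶠ i in l, (S i : Set α) = s i := by
  classical
  refine ⟨fun i => if h : (s i).Finite then h.toFinset else ∅, hs.mono fun i hi => ?_⟩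
  simp [hi]

lemma IsFoelnerNet.of_isFoelner {G ι : Type*} [Group G] [DecidableEq G] [MeasurableSpace G]
    [MeasurableMul G] {l : Filter ι} {Λ : ι → Set G} (hΛ : IsFoelner G Measure.count l Λ)
    {S : ι → Finset G} (hS : ∀ᶠ i in l, (S i : Set G) = Λ i) : IsFoelnerNet l S where
  eventually_nonempty := by
    filter_upwards [hS, hΛ.eventually_meas_ne_zero] with i hi h_ne
    rw [← Finset.coe_nonempty, hi]
    exact nonempty_of_measure_ne_zero h_ne
  tendsto_boundaryRatio k := by
    refine ((ENNReal.tendsto_toReal ENNReal.zero_ne_top).comp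
      (hΛ.tendsto_meas_smul_symmDiff k)).congr' ?_
    filter_upwards [hS, hΛ.eventually_measurableSet] with i hi h_meas
    rw [← hi] at h_meas
    have h_meas_symmDiff := (h_meas.const_smul k).symmDiff h_meas
    rw [← Finset.coe_smul_finset, ← Finset.coe_symmDiff] at h_meas_symmDiff
    rw [Function.comp_apply, ← hi, ← Finset.coe_smul_finset, ← Finset.coe_symmDiff,
      Measure.count_apply_finset' h_meas, Measure.count_apply_finset' h_meas_symmDiff,
      ENNReal.toReal_div, ENNReal.toReal_natCast, ENNReal.toReal_natCast, boundaryRatio]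

lemma exists_isFoelnerNet {G ι : Type*} [Group G] [DecidableEq G] [MeasurableSpace G]
    [MeasurableMul G] {l : Filter ι} {Λ : ι → Set G} (hΛ : IsFoelner G Measure.count l Λ) :
    ∃ S : ι → Finset G, (∀ᶠ i in l, (S i : Set G) = Λ i) ∧ IsFoelnerNet l S := by
  obtain ⟨S, hS⟩ := exists_finset_eventually_coe_eq <|
    (hΛ.eventually_measurableSet.and hΛ.eventually_meas_ne_top).mono fun i hi =>
      (Measure.count_apply_lt_top' hi.1).1 hi.2.lt_top
  exact ⟨S, hS, .of_isFoelner hΛ hS⟩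

lemma mul_singleton_eq_smul {G : Type*} [CommSemigroup G] (s : Set G) (g : G) :
    s * {g} = g • s := by
  rw [mul_comm, ← smul_eq_mul, Set.singleton_smul]

lemma isFoelner_of_tendsto_toReal {G ι : Type*} [CommGroup G] [MeasurableSpace G]
    {μ : Measure G} [μ.IsMulLeftInvariant] {l : Filter ι} {Λ : ι → Set G}
    (h_meas : ∀ᶠ i in l, MeasurableSet (Λ i)) (h_fin : ∀ᶠ i in l, 0 < μ (Λ i) ∧ μ (Λ i) < ⊤)
    (h_lim : ∀ g : G, Tendsto
      (fun i => (μ (symmDiff (Λ i) (Λ i * {g}))).toReal / (μ (Λ i)).toReal) l (𝓝 0)) :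
    IsFoelner G μ l Λ where
  eventually_measurableSet := h_meas
  eventually_meas_ne_zero := h_fin.mono fun _ h => h.1.ne'
  eventually_meas_ne_top := h_fin.mono fun _ h => h.2.ne
  tendsto_meas_smul_symmDiff g := by
    have h_ofReal := ENNReal.tendsto_ofReal (h_lim g)
    rw [ENNReal.ofReal_zero] at h_ofReal
    refine h_ofReal.congr' (h_fin.mono fun i hi => ?_)
    have h_ne_top : μ ((g • Λ i) ∆ Λ i) ≠ ⊤ :=
      measure_symmDiff_ne_top (by rw [measure_smul]; exact hi.2.ne) hi.2.ne
    rw [← ENNReal.toReal_div, mul_singleton_eq_smul, symmDiff_comm,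
      ENNReal.ofReal_toReal (ENNReal.div_ne_top h_ne_top hi.1.ne')]

lemma setIntegral_count_finset {α E : Type*} [MeasurableSpace α] [NormedAddCommGroup E]
    [NormedSpace ℝ E] [CompleteSpace E] {s : Finset α} (hs : MeasurableSet (s : Set α)) {f : α → E}
    (hf : StronglyMeasurable f) : ∫ x in s, f x ∂Measure.count = ∑ x ∈ s, f x := by
  classical
  have h_restrict : Measure.count.restrict (s : Set α) = ∑ x ∈ s, Measure.dirac x := by
    ext t ht
    have h_inter : t ∩ s = ((s.filter (· ∈ t) : Finset α) : Set α) := by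
      rw [Finset.coe_filter, Set.inter_comm]
      rfl
    have h_meas := h_inter ▸ ht.inter hs
    rw [Measure.restrict_apply ht, h_inter, Measure.count_apply_finset' h_meas,
      Measure.finsetSum_apply, Finset.card_filter, Nat.cast_sum]
    refine Finset.sum_congr rfl fun x _ => ?_
    rw [Measure.dirac_apply' x ht, Set.indicator_apply, Nat.cast_ite, Nat.cast_one, Nat.cast_zero,
      Pi.one_apply]
  rw [h_restrict, integral_finsetSum_measure fun x _ => integrable_dirac' hf enorm_lt_top]
  simp only [integral_dirac' _ _ hf]

lemma isWeaklyMixing_of_tendsto_setIntegral {A G : Type*} [Ring A] [StarRing A] [Algebra ℂ A]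
    [Monoid G] [MeasurableSpace G] {ω : A →ₗ[ℂ] ℂ} {τ : G →* (A ≃⋆ₐ[ℂ] A)} {Λ : ℕ → Set G}
    (hτ_meas : ∀ a b, Measurable fun g => ω (a * τ g b))
    (h_meas : ∀ᶠ n in atTop, MeasurableSet (Λ n))
    (h_fin : ∀ᶠ n in atTop, 0 < Measure.count (Λ n) ∧ Measure.count (Λ n) < ⊤)
    (h_lim : ∀ a b : A, Tendsto (fun n => (Measure.count (Λ n)).toReal⁻¹ *
      ∫ g in Λ n, ‖ω (a * τ g b) - ω a * ω b‖ ∂Measure.count) atTop (𝓝 0)) :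
    IsWeaklyMixing ω τ := by
  obtain ⟨S, hS⟩ := exists_finset_eventually_coe_eq <| (h_meas.and h_fin).mono fun n hn =>
    (Measure.count_apply_lt_top' hn.1).1 hn.2.2
  refine ⟨S, ?_, fun a b => (h_lim a b).congr' ?_⟩
  · filter_upwards [hS, h_fin] with n hn h_pos
    rw [← Finset.coe_nonempty, hn]
    exact nonempty_of_measure_ne_zero h_pos.1.ne'
  · filter_upwards [hS, h_meas] with n hn hn_meas
    rw [← hn] at hn_meas ⊢
    rw [setIntegral_count_finset hn_meas ((hτ_meas a b).sub_const _).norm.stronglyMeasurable,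
      Measure.count_apply_finset' hn_meas, ENNReal.toReal_natCast, Finset.expect_eq_sum_div_card,
      div_eq_inv_mul]

lemma inv_mul_eq_univ_of_forall_exists {H : Type*} [Group H] {F E : Set H}
    (h : ∀ x, ∃ y ∈ F * {x}, y ∈ E) : F⁻¹ * E = Set.univ := by
  simp only [Set.mul_singleton, Set.exists_mem_image] at h
  refine Set.eq_univ_of_forall fun x => ?_
  obtain ⟨f, hf, hE⟩ := h x
  exact ⟨f⁻¹, Set.inv_mem_inv.2 hf, f * x, hE, inv_mul_cancel_left f x⟩

section Recurrence

variable {A G ι : Type*} [Ring A] [StarRing A] [Algebra ℂ A] [StarModule ℂ A] {ω : A →ₗ[ℂ] ℂ}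
  [CommGroup G] [MeasurableSpace G] [MeasurableMul G] {τ : G →* (A ≃⋆ₐ[ℂ] A)}
  {l : Filter ι} {Λ₁ Λ₂ : ι → Set G}

lemma IsTracialState.eventually_forall_exists_norm_gt (hω : IsTracialState ω)
    (hτ : ∀ g a, ω (τ g a) = ω a) (hmix : IsWeaklyMixing ω τ)
    (hΛ₁ : IsFoelner G Measure.count l Λ₁) (hΛ₂ : IsFoelner G Measure.count l Λ₂)
    (a b c d : A) {ε : ℝ} (hε : 0 < ε) :
    ∀ᶠ n in l, ∀ g₁ g₂ : G, ∃ g ∈ Λ₂ n * {g₂}, ∃ h ∈ Λ₁ n * {g₁},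
      ‖ω (τ (g * h) a * τ g b * τ h c * d)‖ > ‖ω a * ω b * ω c * ω d‖ - ε := by
  classical
  -- Being Følner along `l ×ˢ ⊤` is invariance uniform in the translates `q.2`.
  obtain ⟨S, hS, hS_foelner⟩ := exists_isFoelnerNet <|
    isFoelner_smul (hΛ₁.comp_tendsto (tendsto_fst (g := (⊤ : Filter (G × G))))) fun q => q.2.1
  obtain ⟨T, hT, hT_foelner⟩ := exists_isFoelnerNet <|
    isFoelner_smul (hΛ₂.comp_tendsto (tendsto_fst (g := (⊤ : Filter (G × G))))) fun q => q.2.2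
  have h_all : ∀ᶠ q : ι × G × G in l ×ˢ 𝓟 Set.univ,
      ∃ g ∈ Λ₂ q.1 * {q.2.2}, ∃ h ∈ Λ₁ q.1 * {q.2.1},
        ‖ω (τ (g * h) a * τ g b * τ h c * d)‖ > ‖ω a * ω b * ω c * ω d‖ - ε := by
    rw [principal_univ]
    filter_upwards [hS, hT, hω.eventually_exists_norm_gt hτ hmix hS_foelner hT_foelner a b c d hε]
      with q hSq hTq ⟨g, hg, h, hh, h_gt⟩
    rw [mul_singleton_eq_smul, mul_singleton_eq_smul]
    exact ⟨g, hTq.subset hg, h, hSq.subset hh, h_gt⟩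
  filter_upwards [eventually_prod_principal_iff.1 h_all] with n hn g₁ g₂
  exact hn (g₁, g₂) trivial

theorem recurrence_relatively_dense_general (hω : IsTracialState ω)
    (hτ : ∀ g a, ω (τ g a) = ω a) (hmix : IsWeaklyMixing ω τ)
    (hΛ₁ : IsFoelner G Measure.count l Λ₁) (hΛ₂ : IsFoelner G Measure.count l Λ₂)
    (a b c d : A) {ε : ℝ} (hε : 0 < ε) :
    ∀ᶠ n in l,
      (∀ g₁ g₂ : G, ∃ g ∈ Λ₂ n * {g₂}, ∃ h ∈ Λ₁ n * {g₁},
        ‖ω (τ (g * h) a * τ g b * τ h c * d)‖ > ‖ω a * ω b * ω c * ω d‖ - ε) ∧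
      ∃ F : Set (G × G), F.Finite ∧
        F * {q : G × G | ‖ω (τ (q.1 * q.2) a * τ q.1 b * τ q.2 c * d)‖ >
          ‖ω a * ω b * ω c * ω d‖ - ε} = Set.univ := by
  filter_upwards [hω.eventually_forall_exists_norm_gt hτ hmix hΛ₁ hΛ₂ a b c d hε,
    hΛ₁.eventually_measurableSet, hΛ₁.eventually_meas_ne_top,
    hΛ₂.eventually_measurableSet, hΛ₂.eventually_meas_ne_top]
    with n hn h_meas₁ h_top₁ h_meas₂ h_top₂
  have h_fin₁ := (Measure.count_apply_lt_top' h_meas₁).1 h_top₁.lt_top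
  have h_fin₂ := (Measure.count_apply_lt_top' h_meas₂).1 h_top₂.lt_top
  refine ⟨hn, (Λ₂ n ×ˢ Λ₁ n)⁻¹, (h_fin₂.prod h_fin₁).inv, ?_⟩
  refine inv_mul_eq_univ_of_forall_exists fun x => ?_
  obtain ⟨g, hg, h, hh, h_gt⟩ := hn x.2 x.1
  refine ⟨(g, h), ?_, h_gt⟩
  rw [← Set.singleton_prod_singleton, Set.prod_mul_prod_comm]
  exact ⟨hg, hh⟩

end Recurrence

/-- **Corollary 5.7(2): relatively dense recurrence** (counting measure case). -/
theorem recurrence_relatively_dense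
    -- a unital C*-algebra A
    {A : Type*} [NormedRing A] [StarRing A] [CStarRing A] [NormedAlgebra ℂ A]
    [CompleteSpace A] [StarModule ℂ A]
    -- a tracial state ω on A
    (ω : A →ₗ[ℂ] ℂ) (hω_pos : ∀ a : A, 0 ≤ ω (star a * a)) (hω_one : ω 1 = 1)
    (hω_tracial : ∀ a b : A, ω (a * b) = ω (b * a))
    -- a countable second countable topological abelian group G with the counting measure
    -- on its Borel σ-algebra
    {G : Type*} [CommGroup G] [Countable G] [TopologicalSpace G] [IsTopologicalGroup G]
    [SecondCountableTopology G] [MeasurableSpace G] [BorelSpace G]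
    -- the action τ, making (A, ω, τ, G) a C*-dynamical system
    (τ : G → A ≃⋆ₐ[ℂ] A)
    (hτ_one : ∀ a : A, τ 1 a = a)
    (hτ_mul : ∀ g h a, τ g (τ h a) = τ (g * h) a)
    (hω_inv : ∀ g a, ω (τ g a) = ω a)
    (hτ_meas : ∀ a b : A, Measurable fun g : G => ω (a * τ g b))
    -- the system is weakly mixing (w.r.t. some, equivalently every, Følner sequence in G)
    (hWM : ∃ Λ : ℕ → Set G, (∀ n, MeasurableSet (Λ n)) ∧
      (∀ᶠ n in atTop, 0 < Measure.count (Λ n) ∧ Measure.count (Λ n) < ⊤) ∧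
      (∀ g : G, Tendsto
        (fun n => (Measure.count (symmDiff (Λ n) (Λ n * {g}))).toReal / (Measure.count (Λ n)).toReal)
        atTop (𝓝 0)) ∧
      ∀ a b : A, Tendsto
        (fun n => (Measure.count (Λ n)).toReal⁻¹ * ∫ g in Λ n, ‖ω (a * τ g b) - ω a * ω b‖ ∂Measure.count)
        atTop (𝓝 0))
    -- (g,h,j,k) ↦ ω(τ_h(a₁) τ_g(a₂) τ_{gh}(a₃) τ_{jk}(a₄) τ_j(a₅) τ_k(a₆)) is
    -- Σ² × Σ²-measurable
    (hmeas6 : ∀ a₁ a₂ a₃ a₄ a₅ a₆ : A, Measurable fun q : (G × G) × (G × G) =>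
      ω (τ q.1.2 a₁ * τ q.1.1 a₂ * τ (q.1.1 * q.1.2) a₃ *
        τ (q.2.1 * q.2.2) a₄ * τ q.2.1 a₅ * τ q.2.2 a₆))
    -- a uniform Følner sequence (Λ1 n) in G ...
    (Λ1 : ℕ → Set G)
    (hΛ1meas : ∀ n, MeasurableSet (Λ1 n))
    (hΛ1fin : ∀ᶠ n in atTop, 0 < Measure.count (Λ1 n) ∧ Measure.count (Λ1 n) < ⊤)
    (hΛ1folner : ∀ g : G, Tendsto
      (fun n => (Measure.count (symmDiff (Λ1 n) (Λ1 n * {g}))).toReal / (Measure.count (Λ1 n)).toReal)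
      atTop (𝓝 0))
    (hΛ1unif : ∀ᶠ m in atTop, ∀ ε > (0 : ℝ), ∀ᶠ n in atTop, ∀ g ∈ Λ1 m,
      (Measure.count (symmDiff (Λ1 n) (Λ1 n * {g}))).toReal ≤ ε * (Measure.count (Λ1 n)).toReal)
    -- ... satisfying the Tempel'man condition ...
    (hΛ1temp : ∃ c : ℝ, 0 < c ∧ ∀ᶠ n in atTop, MeasurableSet ((Λ1 n)⁻¹ * Λ1 n) ∧
      Measure.count ((Λ1 n)⁻¹ * Λ1 n) ≤ ENNReal.ofReal c * Measure.count (Λ1 n))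
    -- ... and such that (Λ1 n⁻¹ Λ1 n) is also Følner in G
    (hΛ1invfin : ∀ᶠ n in atTop, 0 < Measure.count ((Λ1 n)⁻¹ * Λ1 n) ∧ Measure.count ((Λ1 n)⁻¹ * Λ1 n) < ⊤)
    (hΛ1invfolner : ∀ g : G, Tendsto
      (fun n => (Measure.count (symmDiff ((Λ1 n)⁻¹ * Λ1 n) (((Λ1 n)⁻¹ * Λ1 n) * {g}))).toReal /
        (Measure.count ((Λ1 n)⁻¹ * Λ1 n)).toReal)
      atTop (𝓝 0))
    -- a uniform Følner sequence (Λ2 n) in G ...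
    (Λ2 : ℕ → Set G)
    (hΛ2meas : ∀ n, MeasurableSet (Λ2 n))
    (hΛ2fin : ∀ᶠ n in atTop, 0 < Measure.count (Λ2 n) ∧ Measure.count (Λ2 n) < ⊤)
    (hΛ2folner : ∀ g : G, Tendsto
      (fun n => (Measure.count (symmDiff (Λ2 n) (Λ2 n * {g}))).toReal / (Measure.count (Λ2 n)).toReal)
      atTop (𝓝 0))
    (hΛ2unif : ∀ᶠ m in atTop, ∀ ε > (0 : ℝ), ∀ᶠ n in atTop, ∀ g ∈ Λ2 m,
      (Measure.count (symmDiff (Λ2 n) (Λ2 n * {g}))).toReal ≤ ε * (Measure.count (Λ2 n)).toReal)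
    -- ... satisfying the Tempel'man condition ...
    (hΛ2temp : ∃ c : ℝ, 0 < c ∧ ∀ᶠ n in atTop, MeasurableSet ((Λ2 n)⁻¹ * Λ2 n) ∧
      Measure.count ((Λ2 n)⁻¹ * Λ2 n) ≤ ENNReal.ofReal c * Measure.count (Λ2 n))
    -- ... and such that (Λ2 n⁻¹ Λ2 n) is also Følner in G
    (hΛ2invfin : ∀ᶠ n in atTop, 0 < Measure.count ((Λ2 n)⁻¹ * Λ2 n) ∧ Measure.count ((Λ2 n)⁻¹ * Λ2 n) < ⊤)
    (hΛ2invfolner : ∀ g : G, Tendsto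
      (fun n => (Measure.count (symmDiff ((Λ2 n)⁻¹ * Λ2 n) (((Λ2 n)⁻¹ * Λ2 n) * {g}))).toReal /
        (Measure.count ((Λ2 n)⁻¹ * Λ2 n)).toReal)
      atTop (𝓝 0))
    -- the system is uniformly asymptotically abelian with respect to (Λ1 n) (ε-form)
    (hcomm_meas : ∀ a b : A, Measurable fun g : G => ‖a * τ g b - τ g b * a‖)
    (hUAA : ∀ a b : A, ∀ ε > (0 : ℝ), ∀ᶠ n in atTop, ∀ h : G,
      (Measure.count (Λ1 n)).toReal⁻¹ * ∫ g in Λ1 n * {h}, ‖a * τ g b - τ g b * a‖ ∂Measure.count ≤ ε)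
 :
    -- conclusion: recurrence in every right translate of Λ2 n × Λ1 n, hence the set E of
    -- good pairs is relatively dense in G × G
    ∀ ε > (0 : ℝ), ∀ a b c d : A, ∃ n : ℕ,
      (∀ g₁ g₂ : G, ∃ g ∈ Λ2 n * {g₂}, ∃ h ∈ Λ1 n * {g₁},
        ‖ω (τ (g * h) a * τ g b * τ h c * d)‖ > ‖ω a * ω b * ω c * ω d‖ - ε) ∧
      ∃ F : Set (G × G), F.Finite ∧
        F * {q : G × G | ‖ω (τ (q.1 * q.2) a * τ q.1 b * τ q.2 c * d)‖ >
          ‖ω a * ω b * ω c * ω d‖ - ε} = Set.univ := by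
  intro ε hε a b c d
  obtain ⟨Λ, hΛmeas, hΛfin, -, hΛmix⟩ := hWM
  let σ : G →* (A ≃⋆ₐ[ℂ] A) :=
    MonoidHom.mk' τ fun g h => StarAlgEquiv.ext fun a => (hτ_mul g h a).symm
  have hω : IsTracialState ω := ⟨⟨hω_pos, hω_one⟩, hω_tracial⟩
  have hmix : IsWeaklyMixing ω σ :=
    isWeaklyMixing_of_tendsto_setIntegral hτ_meas (.of_forall hΛmeas) hΛfin hΛmix
  have hΛ1 := isFoelner_of_tendsto_toReal (.of_forall hΛ1meas) hΛ1fin hΛ1folner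
  have hΛ2 := isFoelner_of_tendsto_toReal (.of_forall hΛ2meas) hΛ2fin hΛ2folner
  exact (recurrence_relatively_dense_general hω hω_inv hmix hΛ1 hΛ2 a b c d hε).exists
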